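/- Let n : ℕ and let ⟨·,·⟩ denote the Minkowski bilinear form on ℝ^{n+1}. Suppose K, D, F, Γ : Fin (n+1) → ℝ satisfy ⟨K,K⟩ = −4, ⟨K,D⟩ = 0, ⟨D,D⟩ = 14, ⟨K,F⟩ = −2, ⟨D,F⟩ = 4, ⟨F,F⟩ = 0, ⟨K,Γ⟩ = 2, ⟨D,Γ⟩ = 4, ⟨F,Γ⟩ = 2 and ⟨Γ,Γ⟩ = 0. Then Γ = −K + F. -/

import Mathlib

/-- The Minkowski (Lorentzian) bilinear form on `ℝ^{n+1}`:
`⟨x, y⟩ = x 0 * y 0 - ∑_{i=1}^{n} x i * y i`. -/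
def mink (n : ℕ) (x y : Fin (n + 1) → ℝ) : ℝ :=
  x 0 * y 0 - ∑ i ∈ Finset.Ioi (0 : Fin (n + 1)), x i * y i

theorem mink_add_left (n : ℕ) (x y z : Fin (n + 1) → ℝ) :
    mink n (x + y) z = mink n x z + mink n y z := by
  simp only [mink, Pi.add_apply, add_mul, Finset.sum_add_distrib]
  ring

theorem mink_sub_left (n : ℕ) (x y z : Fin (n + 1) → ℝ) :
    mink n (x - y) z = mink n x z - mink n y z := by
  simp only [mink, Pi.sub_apply, sub_mul, Finset.sum_sub_distrib]
  ring

theorem mink_comm (n : ℕ) (x y : Fin (n + 1) → ℝ) : mink n x y = mink n y x := by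
  simp only [mink, mul_comm]

/-- Hodge index: a null vector orthogonal to a positive vector vanishes. -/
theorem mink_index (n : ℕ) (M E : Fin (n + 1) → ℝ) (hM : 0 < mink n M M)
    (hME : mink n M E = 0) (hE : mink n E E = 0) : E = 0 := by
  have cs := Finset.sum_mul_sq_le_sq_mul_sq (Finset.Ioi (0 : Fin (n + 1))) M E
  simp only [mink, ← pow_two] at hM hME hE
  have h1 : ∑ i ∈ Finset.Ioi (0 : Fin (n + 1)), M i * E i = M 0 * E 0 := by linarith
  have h2 : ∑ i ∈ Finset.Ioi (0 : Fin (n + 1)), E i ^ 2 = E 0 ^ 2 := by linarith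
  rw [h1, h2] at cs
  have h0 : E 0 = 0 := by
    by_contra h
    have hp : 0 < E 0 ^ 2 := by positivity
    nlinarith [mul_pos hM hp]
  rw [h0] at h2
  have h3 := (Finset.sum_eq_zero_iff_of_nonneg (fun i _ => sq_nonneg (E i))).1
    (h2.trans (by norm_num))
  funext i
  by_cases hi : i = 0
  · rw [hi, h0]; rfl
  · have := h3 i (Finset.mem_Ioi.2 (Fin.pos_iff_ne_zero.2 hi))
    simpa using this

/-- Proposition 3.7 (case k = 11, component of genus 2 and self-intersection 0):
`Γ₁ ≡ −K_W + F`. -/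
theorem case11_genus2_component (n : ℕ) (K D F Γ : Fin (n + 1) → ℝ)
    (hKK : mink n K K = -4) (hKD : mink n K D = 0) (hDD : mink n D D = 14)
    (hKF : mink n K F = -2) (hDF : mink n D F = 4) (hFF : mink n F F = 0)
    (hKΓ : mink n K Γ = 2) (hDΓ : mink n D Γ = 4) (hFΓ : mink n F Γ = 2)
    (hΓΓ : mink n Γ Γ = 0) :
    Γ = -K + F := by
  have hE : ∀ z, mink n (Γ + K - F) z = mink n Γ z + mink n K z - mink n F z := by
    intro z
    rw [mink_sub_left, mink_add_left]
  have c1 := mink_comm n K D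
  have c2 := mink_comm n K F
  have c3 := mink_comm n D F
  have c4 := mink_comm n K Γ
  have c5 := mink_comm n D Γ
  have c6 := mink_comm n F Γ
  have h := mink_index n D (Γ + K - F) (by rw [hDD]; norm_num)
    (by rw [mink_comm, hE]; linarith)
    (by
      rw [hE, mink_comm n Γ (Γ + K - F), mink_comm n K (Γ + K - F),
        mink_comm n F (Γ + K - F), hE, hE, hE]
      linarith)
  funext i
  have := congrFun h i
  simp only [Pi.add_apply, Pi.sub_apply, Pi.zero_apply, Pi.neg_apply] at this ⊢
  linarith
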